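/- Let k ≥ 1 and n ≥ 2k+4 be integers. Then ρ(L_{n,k}) > ρ(L_{n,k+1}), where ρ denotes the spectral radius. -/

import Mathlib

open SimpleGraph

/-- `G` contains a cycle of length `l`. -/
def HasCycleLen {V : Type} (G : SimpleGraph V) (l : ℕ) : Prop :=
  ∃ (v : V) (c : G.Walk v v), c.IsCycle ∧ c.length = l

/-- The circumference of `G`: the length of a longest cycle. -/
noncomputable def circumference {V : Type} (G : SimpleGraph V) : ℕ :=
  sSup {l | HasCycleLen G l}

/-- `G` is weakly pancyclic with girth 3: it contains a cycle of every length `l`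
with `3 ≤ l ≤ c(G)`. -/
def WeaklyPancyclic3 {V : Type} (G : SimpleGraph V) : Prop :=
  HasCycleLen G 3 ∧ ∀ l : ℕ, 3 ≤ l → l ≤ circumference G → HasCycleLen G l

/-- The number of edges of `G`. -/
noncomputable def edgeCount {V : Type} (G : SimpleGraph V) : ℕ :=
  Nat.card G.edgeSet

/-- The degree of `v` in `G`. -/
noncomputable def degCount {V : Type} (G : SimpleGraph V) (v : V) : ℕ :=
  Nat.card (G.neighborSet v)

/-- The spectral radius of `G`: the largest eigenvalue of the adjacency matrix. -/
noncomputable def specRad {V : Type} [Finite V] (G : SimpleGraph V) : ℝ :=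
  letI := Fintype.ofFinite V
  letI := Classical.decEq V
  letI := Classical.decRel G.Adj
  sSup (spectrum ℝ (G.adjMatrix ℝ))

/-- The signless Laplacian spectral radius of `G`: the largest eigenvalue of `D(G) + A(G)`. -/
noncomputable def qSpecRad {V : Type} [Finite V] (G : SimpleGraph V) : ℝ :=
  letI := Fintype.ofFinite V
  letI := Classical.decEq V
  letI := Classical.decRel G.Adj
  sSup (spectrum ℝ (Matrix.diagonal (fun v => (degCount G v : ℝ)) + G.adjMatrix ℝ))

/-- `L_{n,k} = K_1 ∨ (K_{n-k-1} + K_k)`: vertex `0` is the common vertex of a clique on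
the `n - k` vertices `{0, …, n-k-1}` and a clique on the `k+1` vertices `{0} ∪ {n-k, …, n-1}`. -/
def Lgraph (n k : ℕ) : SimpleGraph (Fin n) :=
  SimpleGraph.fromRel (fun u v =>
    u.val = 0 ∨ v.val = 0 ∨ (u.val < n - k ∧ v.val < n - k) ∨
      (n - k ≤ u.val ∧ n - k ≤ v.val))

/-- `Γ_{n,t} = K_2 ∨ (K_{n-2-t} + t·K_1)`: vertices `0,1` are joined to everything,
vertices `2, …, n-t-1` form a clique, and vertices `n-t, …, n-1` are independent. -/
def GammaGraph (n t : ℕ) : SimpleGraph (Fin n) :=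
  SimpleGraph.fromRel (fun u v =>
    u.val < 2 ∨ v.val < 2 ∨ (u.val < n - t ∧ v.val < n - t))

/-- `F` is a member of the family `F_{n,k}`: there is a clique `K` on `n - k` vertices
such that each connected component of `F - K` is a clique all of whose vertices are
adjacent to one single common vertex of `K` and to no other vertex of `K`. -/
def MemF (n k : ℕ) (F : SimpleGraph (Fin n)) : Prop :=
  ∃ K : Finset (Fin n), K.card = n - k ∧ F.IsClique (↑K : Set (Fin n)) ∧
    (∀ u v : ({x : Fin n | x ∉ K} : Set (Fin n)),
      (F.induce {x : Fin n | x ∉ K}).Reachable u v → (u = v ∨ F.Adj u.1 v.1)) ∧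
    (∀ u : ({x : Fin n | x ∉ K} : Set (Fin n)), ∃! w : Fin n, w ∈ K ∧ F.Adj u.1 w) ∧
    (∀ u v : ({x : Fin n | x ∉ K} : Set (Fin n)),
      (F.induce {x : Fin n | x ∉ K}).Reachable u v →
        ∀ w ∈ K, F.Adj u.1 w → F.Adj v.1 w)

/-- `G` is a subgraph of `H` (up to relabelling): there is an injective graph
homomorphism from `G` to `H`. -/
def IsSubgraphOf {n : ℕ} (G H : SimpleGraph (Fin n)) : Prop :=
  ∃ f : G →g H, Function.Injective f

theorem specRad_eq' {n : ℕ} (G : SimpleGraph (Fin n)) [DecidableRel G.Adj] :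
    specRad G = sSup (spectrum ℝ (G.adjMatrix ℝ)) := by
  unfold specRad
  congr!

theorem mem_spec_iff {n : ℕ} (A : Matrix (Fin n) (Fin n) ℝ) (μ : ℝ) :
    μ ∈ spectrum ℝ A ↔ ∃ v : Fin n → ℝ, v ≠ 0 ∧ ∀ i, (A.mulVec v) i = μ * v i := by
  rw [← Matrix.spectrum_toLin', ← Module.End.hasEigenvalue_iff_mem_spectrum]
  constructor
  · intro h
    obtain ⟨v, hv⟩ := h.exists_hasEigenvector
    refine ⟨v, hv.2, fun i => ?_⟩
    have := hv.apply_eq_smul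
    rw [Matrix.toLin'_apply] at this
    rw [this]; simp
  · rintro ⟨v, h0, hv⟩
    apply Module.End.hasEigenvalue_of_hasEigenvector (x := v)
    rw [Module.End.hasEigenvector_iff, Module.End.mem_eigenspace_iff]
    refine ⟨?_, h0⟩
    rw [Matrix.toLin'_apply]
    ext i
    simp [hv i]

/-- Sum over the big clique without the centre. -/
def bigS (n k : ℕ) (v : Fin n → ℝ) : ℝ :=
  ∑ j : Fin n, if 0 < j.val ∧ j.val < n - k then v j else 0

/-- Sum over the small clique without the centre. -/
def smallS (n k : ℕ) (v : Fin n → ℝ) : ℝ :=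
  ∑ j : Fin n, if n - k ≤ j.val then v j else 0

theorem bigS_const (n k : ℕ) (hk : k < n) (c : ℝ) (v : Fin n → ℝ)
    (hv : ∀ j : Fin n, 0 < j.val ∧ j.val < n - k → v j = c) :
    bigS n k v = ((n : ℝ) - k - 1) * c := by
  have h1 : bigS n k v = ∑ j : Fin n, (fun x : ℕ => if 0 < x ∧ x < n - k then c else 0) j := by
    unfold bigS
    refine Finset.sum_congr rfl fun j _ => ?_
    by_cases h : 0 < j.val ∧ j.val < n - k
    · simp only [if_pos h, hv j h]
    · simp only [if_neg h]
  rw [h1, Fin.sum_univ_eq_sum_range (fun x : ℕ => if 0 < x ∧ x < n - k then c else 0) n, ← Finset.sum_filter]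
  have h2 : (Finset.range n).filter (fun x => 0 < x ∧ x < n - k) = Finset.Ico 1 (n - k) := by
    ext x; simp; omega
  rw [h2, Finset.sum_const, Nat.card_Ico, nsmul_eq_mul, Nat.cast_sub (by omega),
    Nat.cast_sub (by omega)]
  simp

theorem smallS_const (n k : ℕ) (hk : k < n) (c : ℝ) (v : Fin n → ℝ)
    (hv : ∀ j : Fin n, n - k ≤ j.val → v j = c) :
    smallS n k v = (k : ℝ) * c := by
  have h1 : smallS n k v = ∑ j : Fin n, (fun x : ℕ => if n - k ≤ x then c else 0) j := by
    unfold smallS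
    refine Finset.sum_congr rfl fun j _ => ?_
    by_cases h : n - k ≤ j.val
    · simp only [if_pos h, hv j h]
    · simp only [if_neg h]
  rw [h1, Fin.sum_univ_eq_sum_range (fun x : ℕ => if n - k ≤ x then c else 0) n, ← Finset.sum_filter]
  have h2 : (Finset.range n).filter (fun x => n - k ≤ x) = Finset.Ico (n - k) n := by
    ext x; simp; omega
  rw [h2, Finset.sum_const, Nat.card_Ico, nsmul_eq_mul]
  congr 2
  omega

theorem mulVec_formula (n k : ℕ) (hk : k < n) [DecidableRel (Lgraph n k).Adj]
    (v : Fin n → ℝ) (z : Fin n) (hz : z.val = 0) (i : Fin n) :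
    (((Lgraph n k).adjMatrix ℝ).mulVec v) i =
      if i.val = 0 then bigS n k v + smallS n k v
      else if i.val < n - k then v z + bigS n k v - v i
      else v z + smallS n k v - v i := by
  have hzs : v z = ∑ j : Fin n, if j = z then v j else 0 := by simp
  have his : v i = ∑ j : Fin n, if j = i then v j else 0 := by simp
  have hA : (((Lgraph n k).adjMatrix ℝ).mulVec v) i
      = ∑ j : Fin n, if (Lgraph n k).Adj i j then v j else 0 := by
    simp [Matrix.mulVec, dotProduct, SimpleGraph.adjMatrix_apply]
  have hadj : ∀ j, (Lgraph n k).Adj i j ↔ i.val ≠ j.val ∧ (i.val = 0 ∨ j.val = 0 ∨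
      (i.val < n - k ∧ j.val < n - k) ∨ (n - k ≤ i.val ∧ n - k ≤ j.val)) := by
    intro j
    simp only [Lgraph, SimpleGraph.fromRel_adj, ne_eq, Fin.ext_iff]
    tauto
  have e : ∀ j w : Fin n, j = w ↔ j.val = w.val := fun j w => Fin.ext_iff
  rw [hA]
  split_ifs with h1 h2
  · unfold bigS smallS
    rw [← Finset.sum_add_distrib]
    refine Finset.sum_congr rfl fun j _ => ?_
    simp only [hadj]
    split_ifs <;> first | (exfalso; omega) | simp
  · rw [hzs, his]
    unfold bigS
    rw [← Finset.sum_add_distrib, ← Finset.sum_sub_distrib]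
    refine Finset.sum_congr rfl fun j _ => ?_
    simp only [hadj, e]
    split_ifs <;> first | (exfalso; omega) | simp
  · rw [hzs, his]
    unfold smallS
    rw [← Finset.sum_add_distrib, ← Finset.sum_sub_distrib]
    refine Finset.sum_congr rfl fun j _ => ?_
    simp only [hadj, e]
    split_ifs <;> first | (exfalso; omega) | simp

/-- Characteristic polynomial of the quotient matrix. -/
def quotP (a b x : ℝ) : ℝ :=
  x * (x + 1 - a) * (x + 1 - b) - a * (x + 1 - b) - b * (x + 1 - a)

theorem quotP_of_mem (n k : ℕ) (hk : k < n) [DecidableRel (Lgraph n k).Adj] (μ : ℝ)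
    (h1 : (n : ℝ) - k - 1 < μ + 1) (h2 : (k : ℝ) < μ + 1)
    (h : μ ∈ spectrum ℝ ((Lgraph n k).adjMatrix ℝ)) : quotP ((n : ℝ) - k - 1) k μ = 0 := by
  rw [mem_spec_iff] at h
  obtain ⟨v, hv0, hv⟩ := h
  have hs : (0 : ℝ) < μ + 1 := lt_of_le_of_lt (Nat.cast_nonneg k) h2
  let z : Fin n := ⟨0, by omega⟩
  simp only [mulVec_formula n k hk v z rfl] at hv
  set P := bigS n k v with hP
  set Q := smallS n k v with hQ
  have e0 : P + Q = μ * v z := by simpa [z] using hv z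
  have eb : ∀ j : Fin n, 0 < j.val ∧ j.val < n - k → v j = (v z + P) / (μ + 1) := by
    intro j hj
    have := hv j
    rw [if_neg (by omega), if_pos hj.2] at this
    rw [eq_div_iff hs.ne']; linarith
  have es : ∀ j : Fin n, n - k ≤ j.val → v j = (v z + Q) / (μ + 1) := by
    intro j hj
    have := hv j
    rw [if_neg (by omega), if_neg (by omega)] at this
    rw [eq_div_iff hs.ne']; linarith
  have fP : (μ + 1 - ((n : ℝ) - k - 1)) * P = ((n : ℝ) - k - 1) * v z := by
    have := bigS_const n k hk _ v eb
    rw [← hP] at this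
    field_simp at this
    linarith
  have fQ : (μ + 1 - k) * Q = k * v z := by
    have := smallS_const n k hk _ v es
    rw [← hQ] at this
    field_simp at this
    linarith
  have hz : v z ≠ 0 := by
    intro hz
    rw [hz, mul_zero] at fP fQ
    have P0 : P = 0 := (mul_eq_zero.1 fP).resolve_left (by linarith)
    have Q0 : Q = 0 := (mul_eq_zero.1 fQ).resolve_left (by linarith)
    apply hv0
    ext j
    rcases Nat.eq_zero_or_pos j.val with hj | hj
    · have : j = z := Fin.ext hj
      rw [this, hz]; rfl
    · rcases lt_or_ge j.val (n - k) with hj' | hj'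
      · rw [eb j ⟨hj, hj'⟩, hz, P0]; simp
      · rw [es j hj', hz, Q0]; simp
  apply (mul_eq_zero.1 (?_ : v z * quotP ((n : ℝ) - k - 1) k μ = 0)).resolve_left hz
  unfold quotP
  generalize (n : ℝ) - k - 1 = a at *
  linear_combination (-(μ + 1 - a) * (μ + 1 - k)) * e0 + (μ + 1 - k) * fP + (μ + 1 - a) * fQ

theorem mem_of_quotP (n k : ℕ) (hk : k < n) [DecidableRel (Lgraph n k).Adj] (μ : ℝ)
    (h1 : (n : ℝ) - k - 1 < μ + 1) (h2 : (k : ℝ) < μ + 1)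
    (h : quotP ((n : ℝ) - k - 1) k μ = 0) : μ ∈ spectrum ℝ ((Lgraph n k).adjMatrix ℝ) := by
  rw [mem_spec_iff]
  let z : Fin n := ⟨0, by omega⟩
  set a : ℝ := (n : ℝ) - k - 1 with ha
  let v : Fin n → ℝ := fun j => if j.val = 0 then (μ + 1 - a) * (μ + 1 - k)
    else if j.val < n - k then μ + 1 - k else μ + 1 - a
  have vz : v z = (μ + 1 - a) * (μ + 1 - k) := by simp [v, z]
  have hP : bigS n k v = a * (μ + 1 - k) :=
    bigS_const n k hk _ v fun j hj => by
      simp only [v]; rw [if_neg (by omega), if_pos hj.2]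
  have hQ : smallS n k v = k * (μ + 1 - a) :=
    smallS_const n k hk _ v fun j hj => by
      simp only [v]; rw [if_neg (by omega), if_neg (by omega)]
  refine ⟨v, ?_, fun i => ?_⟩
  · intro h0
    have : v z = 0 := by rw [h0]; rfl
    rw [vz] at this
    have : 0 < (μ + 1 - a) * (μ + 1 - k) := mul_pos (by linarith) (by linarith)
    linarith
  · rw [mulVec_formula n k hk v z rfl i, hP, hQ, vz]
    unfold quotP at h
    simp only [v]
    split_ifs
    · linarith
    · ring
    · ring

theorem exists_root (n k : ℕ) (hk : k < n) (c : ℝ) 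
    (h : quotP ((n : ℝ) - k - 1) k c < 0) : ∃ r, c < r ∧ quotP ((n : ℝ) - k - 1) k r = 0 := by
  have hk' : (k : ℝ) + 1 ≤ n := by exact_mod_cast hk
  have hk0 : (0 : ℝ) ≤ k := Nat.cast_nonneg k
  have hpos : 0 ≤ quotP ((n : ℝ) - k - 1) k (max c (n - 1)) := by
    have hm : (n : ℝ) - 1 ≤ max c (n - 1) := le_max_right _ _
    generalize max c ((n : ℝ) - 1) = x at hm
    obtain ⟨a, ha⟩ : ∃ a : ℝ, a = (n : ℝ) - k - 1 := ⟨_, rfl⟩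
    have hn : (n : ℝ) = a + k + 1 := by linarith
    rw [← ha]
    have ha0 : 0 ≤ a := by linarith
    obtain ⟨t, ht⟩ : ∃ t : ℝ, x = a + k + t := ⟨x - a - k, by ring⟩
    have ht0 : 0 ≤ t := by linarith
    have : quotP a k x = (a + k + t) * t * (a + k + t + 1) + t * (a + k + t + 1)
        + a * k * (a + k + t + 2) := by
      unfold quotP; rw [ht]; ring
    rw [this]; positivity
  have hc : ContinuousOn (quotP ((n : ℝ) - k - 1) k) (Set.Icc c (max c (n - 1))) := by
    unfold quotP; fun_prop
  obtain ⟨r, hr, hr0⟩ := intermediate_value_Icc (le_max_left _ _) hc ⟨h.le, hpos⟩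
  refine ⟨r, lt_of_le_of_ne hr.1 ?_, hr0⟩
  rintro rfl
  linarith

theorem quotP_self (a b : ℝ) : quotP a b a = -b := by unfold quotP; ring

/-- Lemma 3.6: `ρ(L_{n,k}) > ρ(L_{n,k+1})` for `n ≥ 2k+4`. -/
theorem specRad_L_lt (n k : ℕ) (hk : 1 ≤ k) (hn : 2 * k + 4 ≤ n) :
    specRad (Lgraph n (k + 1)) < specRad (Lgraph n k) := by
  classical
  rw [specRad_eq', specRad_eq']
  have hk' : (1 : ℝ) ≤ k := by exact_mod_cast hk
  have hn' : 2 * (k : ℝ) + 4 ≤ n := by exact_mod_cast hn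
  have hne : (spectrum ℝ ((Lgraph n (k + 1)).adjMatrix ℝ)).Nonempty := by
    obtain ⟨r, hr, h0⟩ := exists_root n (k + 1) (by omega) ((n : ℝ) - (k + 1 : ℕ) - 1)
      (by rw [quotP_self]; push_cast; linarith)
    exact ⟨r, mem_of_quotP n (k + 1) (by omega) r (by linarith)
      (by push_cast at *; linarith) h0⟩
  have hmem := hne.csSup_mem (Matrix.finite_real_spectrum)
  set μ := sSup (spectrum ℝ ((Lgraph n (k + 1)).adjMatrix ℝ)) with hμ
  suffices H : ∃ c, μ ≤ c ∧ (n : ℝ) - k - 1 ≤ c ∧ quotP ((n : ℝ) - k - 1) k c < 0 by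
    obtain ⟨c, h1, h2, h3⟩ := H
    obtain ⟨r, hr, h0⟩ := exists_root n k (by omega) c h3
    have hm := mem_of_quotP n k (by omega) r (by linarith) (by linarith) h0
    exact lt_of_lt_of_le (lt_of_le_of_lt h1 hr)
      (le_csSup (Matrix.finite_real_spectrum).bddAbove hm)
  rcases le_total μ ((n : ℝ) - k - 1) with h | h
  · exact ⟨_, h, le_rfl, by rw [quotP_self]; linarith⟩
  · refine ⟨μ, le_rfl, h, ?_⟩
    have h0 := quotP_of_mem n (k + 1) (by omega) μ (by push_cast; linarith)
      (by push_cast; linarith) hmem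
    have : quotP ((n : ℝ) - k - 1) k μ = quotP ((n : ℝ) - (k + 1 : ℕ) - 1) (k + 1 : ℕ) μ
        - ((n : ℝ) - 2 * k - 2) * (μ + 2) := by
      unfold quotP; push_cast; ring
    rw [this, h0]
    have : 0 < ((n : ℝ) - 2 * k - 2) * (μ + 2) := mul_pos (by linarith) (by linarith)
    linarith
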